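/- Let p be a prime number and let G be a right-angled Artin group with finite generating set X, i.e., G is the group presented by ⟨X | [x,y] = 1 for all (x,y) ∈ Σ⟩ for some subset Σ of X × X. Then for every nonempty subset X' of X, the subgroup ⟨X'⟩ of G generated by the images of the elements of X' is closed in the pro-p topology on G: for every g ∈ G with g ∉ ⟨X'⟩ there exists a normal subgroup N of G of index a power of p such that g ∉ N⟨X'⟩. -/

import Mathlib

open scoped Pointwise commutatorElement

/-- A subgroup `H` of `G` is closed in the pro-`p` topology on `G` if for every `g ∉ H`
there is a normal subgroup `N` of `G` of `p`-power index with `g ∉ NH`. -/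
def ClosedInProP (p : ℕ) {G : Type*} [Group G] (H : Subgroup G) : Prop :=
  ∀ g : G, g ∉ H → ∃ N : Subgroup G, N.Normal ∧ (∃ k : ℕ, N.index = p ^ k) ∧
    g ∉ (N : Set G) * (H : Set G)

/-!
A parabolic subgroup is a retract, and a retract of a residually `p` group is closed in the
pro-`p` topology, so it suffices to separate each `g ≠ 1` from `1`.

Write `g = x₁^{e₁} ⋯ xₙ^{eₙ}` with `n` minimal, and let `ι = {1, …, n}` be the set of positions,
labelled by the letters `xᵢ`. On functions of subsets of `ι`, let `τ_a` be the operator that adds to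
a subset the next position labelled `a`, where a position may be added once the earlier positions
with non-commuting labels are present and while the later ones are absent. Commuting letters give
commuting operators, and minimality of `n` gives `τ_a² = 0`. Hence `a ↦ 1 + p τ_a` is a
representation of the group with `a^e ↦ 1 + e p τ_a`, and the coefficient of `g` that leads from `∅`
to `ι` is `∏ᵢ p eᵢ ≠ 0`. Reducing modulo a large power of `p` gives a finite image consisting of
operators congruent to `1` modulo `p`, which is a `p`-group.
-/

section ProP

variable {p : ℕ} {G : Type*} [Group G]

theorem isPGroup_prod {P Q : Type*} [Group P] [Group Q] (hP : IsPGroup p P) (hQ : IsPGroup p Q) :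
    IsPGroup p (P × Q) := by
  rw [isPGroup_iff_pow_pow_eq_one] at *
  rintro ⟨x, y⟩
  obtain ⟨m, hm⟩ := hP x
  obtain ⟨n, hn⟩ := hQ y
  refine ⟨m + n, Prod.ext ?_ ?_⟩
  · simp [pow_add, pow_mul, hm]
  · simp [pow_add, pow_mul', hn]

theorem index_ker_eq_pow [Fact p.Prime] {P : Type*} [Group P] [Finite P] (hP : IsPGroup p P)
    (f : G →* P) : ∃ k : ℕ, f.ker.index = p ^ k := by
  rw [Subgroup.index_ker]
  exact IsPGroup.iff_card.1 (hP.to_subgroup f.range)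

theorem ClosedInProP.bot_of_forall_exists_hom [Fact p.Prime]
    (h : ∀ g : G, g ≠ 1 → ∃ (P : Type*) (_ : Group P) (_ : Finite P) (f : G →* P),
      IsPGroup p P ∧ f g ≠ 1) : ClosedInProP p (⊥ : Subgroup G) := by
  intro g hg
  obtain ⟨P, _, _, f, hP, hfg⟩ := h g hg
  refine ⟨f.ker, inferInstance, index_ker_eq_pow hP f, ?_⟩
  rwa [Subgroup.coe_bot, Set.singleton_one, mul_one, SetLike.mem_coe, MonoidHom.mem_ker]

theorem ClosedInProP.of_retraction [Fact p.Prime] (hbot : ClosedInProP p (⊥ : Subgroup G))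
    {A : Subgroup G} (r : G →* G) (hr : ∀ g, r g ∈ A) (hrA : ∀ a ∈ A, r a = a) :
    ClosedInProP p A := by
  intro g hg
  have hne : g⁻¹ * r g ∉ (⊥ : Subgroup G) := by
    rw [Subgroup.mem_bot, inv_mul_eq_one]
    exact fun h => hg (h ▸ hr g)
  obtain ⟨N, hN, ⟨k, hk⟩, hgN⟩ := hbot _ hne
  have hQ : IsPGroup p (G ⧸ N) := .of_card hk
  have : Finite (G ⧸ N) :=
    Nat.finite_of_card_ne_zero (hk.trans_ne (pow_ne_zero k (Fact.out : p.Prime).ne_zero))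
  let π := QuotientGroup.mk' N
  let F : G →* (G ⧸ N) × (G ⧸ N) := π.prod (π.comp r)
  refine ⟨F.ker, inferInstance, index_ker_eq_pow (isPGroup_prod hQ hQ) F, ?_⟩
  rintro ⟨n, hn, a, ha, rfl⟩
  obtain ⟨hn₁, hn₂⟩ : π n = 1 ∧ π (r n) = 1 := Prod.ext_iff.1 hn
  have hπ : π (n * a) = π (r (n * a)) := by simp [hn₁, hn₂, hrA a ha]
  exact hgN ⟨_, QuotientGroup.eq.1 hπ, 1, rfl, mul_one _⟩

end ProP

section Ring

variable {E : Type*} [Ring E]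

theorem natCast_pow_dvd_pow_sub_one {p : ℕ} {x : E} (h : (p : E) ∣ x - 1) (n : ℕ) :
    (p : E) ^ (n + 1) ∣ x ^ p ^ n - 1 := by
  obtain ⟨y, hy⟩ := h
  obtain rfl : x = 1 + p * y := by rw [← hy, add_sub_cancel]
  have hpoly : (p : Polynomial ℤ) ^ (n + 1) ∣
      (1 + (p : Polynomial ℤ) * Polynomial.X) ^ p ^ n - 1 ^ p ^ n :=
    dvd_sub_pow_of_dvd_sub ⟨Polynomial.X, add_sub_cancel_left _ _⟩ n
  simpa using map_dvd (Polynomial.aeval y) hpoly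

/-- The group of units of `E` congruent to `1` modulo `n`; for a matrix ring over `ℤ` this is the
principal congruence subgroup of level `n`. -/
def congruenceUnits (E : Type*) [Ring E] (n : ℕ) : Subgroup Eˣ where
  carrier := {u | (n : E) ∣ u - 1}
  one_mem' := by simp
  mul_mem' {u v} hu hv := by
    have huv : ((u * v : Eˣ) : E) - 1 = (u - 1) * v + (v - 1) := by
      rw [Units.val_mul]; noncomm_ring
    rw [Set.mem_ofPred_eq, huv]
    exact dvd_add (hu.mul_right _) hv
  inv_mem' {u} hu := by
    have huinv : ((u⁻¹ : Eˣ) : E) - 1 = -((u - 1) * (u⁻¹ : Eˣ)) := by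
      rw [sub_mul, Units.mul_inv, one_mul, neg_sub]
    rw [Set.mem_ofPred_eq, huinv, dvd_neg]
    exact hu.mul_right _

theorem isPGroup_congruenceUnits {p m : ℕ} (hpm : (p : E) ^ m = 0) :
    IsPGroup p (congruenceUnits E p) := by
  rw [isPGroup_iff_pow_pow_eq_one]
  rintro ⟨u, hu⟩
  have hdvd := natCast_pow_dvd_pow_sub_one hu m
  rw [pow_succ, hpm, zero_mul, zero_dvd_iff, sub_eq_zero] at hdvd
  exact ⟨m, Subtype.ext (Units.ext (by simpa using hdvd))⟩

/-- The unit `1 + t` attached to an element `t` of square zero. -/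
def oneAddUnit (t : E) (ht : t * t = 0) : Eˣ where
  val := 1 + t
  inv := 1 - t
  val_inv := by simp [add_mul, mul_sub, ht]
  inv_val := by simp [sub_mul, mul_add, ht]

theorem oneAddUnit_zpow (t : E) (ht : t * t = 0) (n : ℤ) :
    ((oneAddUnit t ht ^ n : Eˣ) : E) = 1 + n • t := by
  induction n using Int.induction_on with
  | zero => simp
  | succ k ih =>
    rw [zpow_add_one, Units.val_mul, ih, oneAddUnit, add_smul, one_smul]
    simp only [add_mul, mul_add, one_mul, mul_one, smul_mul_assoc, ht, smul_zero]
    abel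
  | pred k ih =>
    rw [zpow_sub_one, Units.val_mul, ih, sub_smul, one_smul]
    simp only [oneAddUnit, Units.inv_mk, add_mul, mul_sub, one_mul, mul_one, smul_mul_assoc, ht,
      smul_zero]
    abel

theorem commute_oneAddUnit {s t : E} {hs : s * s = 0} {ht : t * t = 0} (h : Commute s t) :
    Commute (oneAddUnit s hs) (oneAddUnit t ht) :=
  Units.ext ((Commute.one_left _).add_left ((Commute.one_right _).add_right h)).eq

end Ring

section AddLetter

variable {X ι : Type*} [LinearOrder ι] (Γ : SimpleGraph X) (ℓ : ι → X)

/-- Between any two positions carrying the same letter there is a position whose letter is not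
adjacent to it. Letters adjacent in `Γ` are those that commute; a letter is not adjacent to
itself. -/
def IsSeparated : Prop :=
  ∀ ⦃i j⦄, i < j → ℓ i = ℓ j → ∃ k, i < k ∧ k < j ∧ ¬Γ.Adj (ℓ k) (ℓ j)

/-- The position `i` may be added to `I`: among the positions whose letter is not adjacent to that
of `i`, those in `I` are exactly the ones before `i`. Taking `j = i` shows `i ∉ I`. -/
def Addable (I : Finset ι) (i : ι) : Prop :=
  ∀ j, ¬Γ.Adj (ℓ j) (ℓ i) → (j ∈ I ↔ j < i)

variable {Γ ℓ}

theorem addable_insert_iff {i j : ι} (h : Γ.Adj (ℓ i) (ℓ j)) (I : Finset ι) :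
    Addable Γ ℓ (insert i I) j ↔ Addable Γ ℓ I j := by
  refine forall₂_congr fun k hk => ?_
  have hki : k ≠ i := by rintro rfl; exact hk h
  simp [hki]

theorem Addable.eq_of_label_eq {I : Finset ι} {i j : ι} (hi : Addable Γ ℓ I i)
    (hj : Addable Γ ℓ I j) (h : ℓ i = ℓ j) : i = j := by
  have hij : ¬i < j := fun hlt => lt_irrefl i <| (hi i Γ.irrefl).1 ((hj i (h ▸ Γ.irrefl)).2 hlt)
  have hji : ¬j < i := fun hlt => lt_irrefl j <| (hj j Γ.irrefl).1 ((hi j (h ▸ Γ.irrefl)).2 hlt)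
  exact le_antisymm (not_lt.1 hji) (not_lt.1 hij)

theorem IsSeparated.not_addable_insert (hℓ : IsSeparated Γ ℓ) {I : Finset ι} {i j : ι}
    (hi : Addable Γ ℓ I i) (h : ℓ i = ℓ j) : ¬Addable Γ ℓ (insert i I) j := by
  intro hj
  have hij : i < j := (hj i (h ▸ Γ.irrefl)).1 (Finset.mem_insert_self i I)
  obtain ⟨k, hik, hkj, hk⟩ := hℓ hij h
  have hkI : k ∈ I := Finset.mem_of_mem_insert_of_ne ((hj k hk).2 hkj) hik.ne'
  exact hik.not_gt ((hi k (h ▸ hk)).1 hkI)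

variable (Γ ℓ) [Fintype ι] (R : Type*) [CommSemiring R]

open Classical in
/-- The operator `τ_a` on functions of sets of positions, sending `f` to `I ↦ f (insert i I)`, where
`i` is the addable position with letter `a`, and to `0` at `I` if there is none. Such an `i` is
unique, so the sum has at most one term. -/
noncomputable def addLetter (a : X) : Module.End R (Finset ι → R) where
  toFun f I := ∑ i with ℓ i = a ∧ Addable Γ ℓ I i, f (insert i I)
  map_add' f g := by ext I; simp [Finset.sum_add_distrib]
  map_smul' c f := by ext I; simp [Finset.mul_sum]

variable {Γ ℓ R}

open Classical in
theorem addLetter_apply (a : X) (f : Finset ι → R) (I : Finset ι) :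
    addLetter Γ ℓ R a f I = ∑ i with ℓ i = a ∧ Addable Γ ℓ I i, f (insert i I) :=
  rfl

theorem addLetter_apply_of_addable {I : Finset ι} {i : ι} (hi : Addable Γ ℓ I i)
    (f : Finset ι → R) : addLetter Γ ℓ R (ℓ i) f I = f (insert i I) := by
  classical
  rw [addLetter_apply, Finset.sum_eq_single_of_mem i (by simp [hi])]
  intro j hj hji
  simp only [Finset.mem_filter_univ] at hj
  exact absurd (hj.2.eq_of_label_eq hi hj.1) hji

theorem IsSeparated.addLetter_mul_self (hℓ : IsSeparated Γ ℓ) (a : X) :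
    addLetter Γ ℓ R a * addLetter Γ ℓ R a = 0 := by
  classical
  refine LinearMap.ext fun f => funext fun I => Finset.sum_eq_zero fun i hi => ?_
  refine Finset.sum_eq_zero fun j hj => ?_
  simp only [Finset.mem_filter_univ] at hi hj
  exact absurd hj.2 (hℓ.not_addable_insert hi.2 (hi.1.trans hj.1.symm))

open Classical in
theorem addLetter_mul_apply_of_adj {a b : X} (h : Γ.Adj a b) (f : Finset ι → R) (I : Finset ι) :
    (addLetter Γ ℓ R a * addLetter Γ ℓ R b) f I =
      ∑ i with ℓ i = a ∧ Addable Γ ℓ I i, ∑ j with ℓ j = b ∧ Addable Γ ℓ I j,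
        f (insert j (insert i I)) := by
  refine Finset.sum_congr rfl fun i hi => ?_
  obtain ⟨rfl, -⟩ := (Finset.mem_filter_univ _).1 hi
  rw [addLetter_apply]
  congr 1
  ext j
  simp only [Finset.mem_filter_univ]
  exact and_congr_right fun hj => addable_insert_iff (hj ▸ h) I

theorem commute_addLetter {a b : X} (h : Γ.Adj a b) :
    Commute (addLetter Γ ℓ R a) (addLetter Γ ℓ R b) := by
  classical
  refine LinearMap.ext fun f => funext fun I => ?_
  rw [addLetter_mul_apply_of_adj h, addLetter_mul_apply_of_adj h.symm, Finset.sum_comm]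
  simp only [Finset.insert_comm]

end AddLetter

section InitialSegment

/-- The first `m` positions among `n`; unlike `Finset.Iio`, it allows `m = n`. -/
def initialSegment (n m : ℕ) : Finset (Fin n) := {i | i.val < m}

theorem card_initialSegment_le (n m : ℕ) : (initialSegment n m).card ≤ m := by
  simp [initialSegment, Fin.card_filter_val_lt]

theorem insert_initialSegment {n : ℕ} (i : Fin n) :
    insert i (initialSegment n i) = initialSegment n (i + 1) := by
  ext j
  simp [initialSegment, Fin.ext_iff, le_iff_eq_or_lt]

theorem addable_initialSegment {X : Type*} (Γ : SimpleGraph X) {n : ℕ} (ℓ : Fin n → X) (i : Fin n) :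
    Addable Γ ℓ (initialSegment n i) i :=
  fun j _ => by simp [initialSegment]

end InitialSegment

theorem exists_eq_append_cons_append_cons {α : Type*} (w : List α) {i j : Fin w.length}
    (hij : i < j) : ∃ u v v', w = u ++ w[i] :: (v ++ w[j] :: v') ∧
      ∀ s ∈ v, ∃ k : Fin w.length, i < k ∧ k < j ∧ w[k] = s := by
  obtain ⟨d, hd⟩ : ∃ d : ℕ, (j : ℕ) = i + 1 + d := Nat.exists_eq_add_of_le hij
  have hdlen : d < (w.drop (i + 1)).length := by grind
  refine ⟨w.take i, (w.drop (i + 1)).take d, (w.drop (i + 1)).drop (d + 1), ?_, fun s hs => ?_⟩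
  · have hget : (w.drop (i + 1))[d] = w[j] := by simp [hd]
    rw [← hget, List.getElem_cons_drop hdlen, List.take_append_drop]
    simp
  · obtain ⟨e, he, rfl⟩ := List.mem_take_iff_getElem.1 hs
    refine ⟨⟨i + 1 + e, by grind⟩, ?_, ?_, by simp⟩ <;> grind

section Words

variable {X : Type*}

/-- A word `a₁^{e₁} ⋯ aₙ^{eₙ}` with integer exponents, as the list of its syllables `(aᵢ, eᵢ)`. -/
abbrev SyllableWord (X : Type*) := List (X × ℤ)

namespace SyllableWord

/-- The letter of the syllable at a given position. -/
def label (w : SyllableWord X) (i : Fin w.length) : X := w[i].1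

/-- The value of a word when the letter `a` is interpreted as `f a`. -/
def eval {G : Type*} [Group G] (f : X → G) (w : SyllableWord X) : G :=
  (w.map fun s => f s.1 ^ s.2).prod

/-- A word is reduced if none of its syllables is trivial and no two of them can be merged after
moving one past letters adjacent to it in `Γ`. -/
structure IsReduced (Γ : SimpleGraph X) (w : SyllableWord X) : Prop where
  exponent_ne_zero : ∀ s ∈ w, s.2 ≠ 0
  isSeparated : IsSeparated Γ w.label

theorem IsReduced.prod_mul_ne_zero {Γ : SimpleGraph X} {w : SyllableWord X} (hw : w.IsReduced Γ)
    {n : ℤ} (hn : n ≠ 0) : (w.map fun s => s.2 * n).prod ≠ 0 := by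
  refine List.prod_ne_zero fun h => ?_
  obtain ⟨s, hs, hzero⟩ := List.mem_map.1 h
  exact mul_ne_zero (hw.exponent_ne_zero s hs) hn hzero

section Eval

variable {G : Type*} [Group G] {f : X → G}

theorem eval_nil : eval f [] = 1 := rfl

theorem eval_cons (s : X × ℤ) (w : SyllableWord X) : eval f (s :: w) = f s.1 ^ s.2 * eval f w := by
  simp [eval]

theorem eval_append (v w : SyllableWord X) : eval f (v ++ w) = eval f v * eval f w := by
  simp [eval]

theorem map_eval {H : Type*} [Group H] (φ : G →* H) (w : SyllableWord X) :
    φ (eval f w) = eval (φ ∘ f) w := by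
  simp [eval, map_list_prod, Function.comp_def]

theorem exists_eval_eq (hf : Subgroup.closure (Set.range f) = ⊤) (g : G) :
    ∃ w, eval f w = g := by
  have hg : g ∈ Subgroup.closure (Set.range f) := hf ▸ Subgroup.mem_top g
  induction hg using Subgroup.closure_induction_left with
  | one => exact ⟨[], eval_nil⟩
  | mul_left _ hx _ _ ih =>
    obtain ⟨⟨a, rfl⟩, w, rfl⟩ := And.intro hx ih
    exact ⟨(a, 1) :: w, by simp [eval_cons]⟩
  | inv_mul_cancel _ hx _ _ ih =>
    obtain ⟨⟨a, rfl⟩, w, rfl⟩ := And.intro hx ih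
    exact ⟨(a, -1) :: w, by simp [eval_cons]⟩

variable {Γ : SimpleGraph X}

theorem commute_eval (hΓ : ∀ a b, Γ.Adj a b → Commute (f a) (f b)) {a : X}
    {w : SyllableWord X} (hw : ∀ s ∈ w, Γ.Adj s.1 a) (n : ℤ) :
    Commute (eval f w) (f a ^ n) := by
  refine Commute.list_prod_left _ _ fun y hy => ?_
  obtain ⟨s, hs, rfl⟩ := List.mem_map.1 hy
  exact (hΓ _ _ (hw s hs)).zpow_zpow _ _

theorem eval_merge (hΓ : ∀ a b, Γ.Adj a b → Commute (f a) (f b)) {a : X}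
    {v : SyllableWord X} (hv : ∀ s ∈ v, Γ.Adj s.1 a) (m n : ℤ) (u w : SyllableWord X) :
    eval f (u ++ (a, m) :: (v ++ (a, n) :: w)) = eval f (u ++ (a, m + n) :: (v ++ w)) := by
  have hcomm : eval f v * f a ^ n = f a ^ n * eval f v := commute_eval hΓ hv n
  simp only [eval_append, eval_cons, zpow_add, mul_assoc]
  rw [← mul_assoc (eval f v), hcomm, mul_assoc]

theorem isReduced_of_minimal (hΓ : ∀ a b, Γ.Adj a b → Commute (f a) (f b))
    {w : SyllableWord X} (hw : ∀ v, eval f v = eval f w → w.length ≤ v.length) : IsReduced Γ w where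
  exponent_ne_zero := by
    rintro ⟨a, n⟩ hs rfl
    obtain ⟨u, v, rfl⟩ := List.append_of_mem hs
    have hle := hw (u ++ v) (by simp [eval_append, eval_cons])
    simp at hle
  isSeparated := by
    intro i j hij hlabel
    by_contra! hadj
    obtain ⟨u, v, v', hsplit, hv⟩ := exists_eq_append_cons_append_cons w hij
    have hvadj : ∀ s ∈ v, Γ.Adj s.1 w[j].1 := by
      intro s hs
      obtain ⟨k, hik, hkj, rfl⟩ := hv s hs
      exact hadj k hik hkj
    have hmerge : eval f (u ++ (w[j].1, w[i].2 + w[j].2) :: (v ++ v')) = eval f w := by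
      have hi : w[i] = (w[j].1, w[i].2) := Prod.ext hlabel rfl
      rw [← eval_merge hΓ hvadj]
      conv_rhs => rw [hsplit]
      rw [hi]
    have hle := hw _ hmerge
    have hlen := congrArg List.length hsplit
    simp only [List.length_append, List.length_cons] at hle hlen
    lia

theorem exists_isReduced (hΓ : ∀ a b, Γ.Adj a b → Commute (f a) (f b))
    (hf : Subgroup.closure (Set.range f) = ⊤) (g : G) :
    ∃ w, IsReduced Γ w ∧ eval f w = g := by
  obtain ⟨w, hw, hmin⟩ := exists_minimalFor_of_wellFoundedLT (fun w => eval f w = g) List.length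
    (exists_eval_eq hf g)
  refine ⟨w, isReduced_of_minimal hΓ fun v hv => ?_, hw⟩
  exact (le_total _ _).elim (hmin (hv.trans hw)) id

end Eval

end SyllableWord

end Words

section Representation

variable {X ι : Type*} [LinearOrder ι] [Fintype ι] {Γ : SimpleGraph X} {R : Type*} [CommRing R]

/-- The unit `1 + r τ_a`, which represents the letter `a`. -/
noncomputable def letterUnit {ℓ : ι → X} (hℓ : IsSeparated Γ ℓ) (r : R) (a : X) :
    (Module.End R (Finset ι → R))ˣ :=
  oneAddUnit (r • addLetter Γ ℓ R a)
    (by rw [smul_mul_smul_comm, hℓ.addLetter_mul_self, smul_zero])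

theorem commute_letterUnit {ℓ : ι → X} (hℓ : IsSeparated Γ ℓ) (r : R) {a b : X} (h : Γ.Adj a b) :
    Commute (letterUnit hℓ r a) (letterUnit hℓ r b) :=
  commute_oneAddUnit (((commute_addLetter h).smul_left r).smul_right r)

theorem letterUnit_zpow_apply {ℓ : ι → X} (hℓ : IsSeparated Γ ℓ) (r : R) (a : X) (n : ℤ)
    (f : Finset ι → R) (I : Finset ι) :
    ((letterUnit hℓ r a ^ n : (Module.End R (Finset ι → R))ˣ) : Module.End R (Finset ι → R)) f I =
      f I + n * r * addLetter Γ ℓ R a f I := by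
  rw [letterUnit, oneAddUnit_zpow]
  simp [mul_assoc, mul_left_comm]

theorem letterUnit_mem_congruenceUnits {ℓ : ι → X} (hℓ : IsSeparated Γ ℓ) (n : ℕ) (a : X) :
    letterUnit hℓ (n : R) a ∈ congruenceUnits (Module.End R (Finset ι → R)) n :=
  ⟨addLetter Γ ℓ R a, by simp [letterUnit, oneAddUnit, Nat.cast_smul_eq_nsmul]⟩

namespace SyllableWord

variable {w : SyllableWord X} (hw : IsSeparated Γ w.label) (r : R)

theorem eval_letterUnit_drop_apply {m : ℕ} (hm : m < w.length)
    (f : Finset (Fin w.length) → R) (I : Finset (Fin w.length)) :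
    (eval (letterUnit hw r) (w.drop m)).val f I =
      (eval (letterUnit hw r) (w.drop (m + 1))).val f I +
        w[m].2 * r * addLetter Γ w.label R w[m].1
          ((eval (letterUnit hw r) (w.drop (m + 1))).val f) I := by
  rw [List.drop_eq_getElem_cons hm, eval_cons, Units.val_mul, Module.End.mul_apply,
    letterUnit_zpow_apply]

theorem eval_letterUnit_drop_apply_eq_zero {m : ℕ} (hm : m ≤ w.length)
    {I : Finset (Fin w.length)} (hI : I.card < m) :
    (eval (letterUnit hw r) (w.drop m)).val (Pi.single Finset.univ 1) I = 0 := by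
  induction hm using Nat.decreasingInduction generalizing I with
  | self =>
    have hne : I ≠ Finset.univ := by rintro rfl; simp at hI
    simp [eval_nil, hne]
  | of_succ m hm ih =>
    rw [eval_letterUnit_drop_apply hw r hm, ih (hI.trans (Nat.lt_succ_self m)), addLetter_apply,
      Finset.sum_eq_zero, mul_zero, add_zero]
    exact fun i _ => ih ((Finset.card_insert_le i I).trans_lt (Nat.succ_lt_succ hI))

theorem eval_letterUnit_drop_apply_initialSegment {m : ℕ} (hm : m ≤ w.length) :
    (eval (letterUnit hw r) (w.drop m)).val (Pi.single Finset.univ 1) (initialSegment w.length m) =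
      ((w.drop m).map fun s => s.2 * r).prod := by
  induction hm using Nat.decreasingInduction with
  | self => simp [eval_nil, initialSegment]
  | of_succ m hm ih =>
    have hcard : (initialSegment w.length m).card < m + 1 :=
      Nat.lt_succ_of_le (card_initialSegment_le _ m)
    have hletter : w[m].1 = w.label ⟨m, hm⟩ := rfl
    rw [eval_letterUnit_drop_apply hw r hm, eval_letterUnit_drop_apply_eq_zero hw r hm hcard,
      zero_add, hletter, addLetter_apply_of_addable (addable_initialSegment Γ w.label ⟨m, hm⟩),
      insert_initialSegment, ih, List.drop_eq_getElem_cons hm, List.map_cons, List.prod_cons]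

theorem eval_letterUnit_apply_empty :
    (eval (letterUnit hw r) w).val (Pi.single Finset.univ 1) ∅ =
      (w.map fun s => s.2 * r).prod := by
  simpa [initialSegment] using
    eval_letterUnit_drop_apply_initialSegment hw r (Nat.zero_le _)

theorem eval_letterUnit_ne_one (hr : (w.map fun s => s.2 * r).prod ≠ 0) (hnil : w ≠ []) :
    eval (letterUnit hw r) w ≠ 1 := by
  intro h
  have hempty := eval_letterUnit_apply_empty hw r
  have : (∅ : Finset (Fin w.length)) ≠ Finset.univ := by
    have : Nonempty (Fin w.length) := ⟨⟨0, List.length_pos_iff.2 hnil⟩⟩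
    exact Finset.univ_nonempty.ne_empty.symm
  rw [h, Units.val_one, Module.End.one_apply, Pi.single_eq_of_ne this] at hempty
  exact hr hempty.symm

end SyllableWord

end Representation

theorem exists_intCast_zmod_pow_ne_zero {p : ℕ} (hp : p ≠ 1) {c : ℤ} (hc : c ≠ 0) :
    ∃ m : ℕ, (c : ZMod (p ^ m)) ≠ 0 := by
  obtain ⟨m, hm⟩ := Int.finiteMultiplicity_iff (a := p).2 ⟨hp, hc⟩
  refine ⟨m + 1, fun h => hm ?_⟩
  exact_mod_cast (ZMod.intCast_zmod_eq_zero_iff_dvd c (p ^ (m + 1))).1 h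

/-- The group `⟨X | [x, y] = 1 for (x, y) ∈ S⟩`. -/
abbrev RightAngledArtinGroup {X : Type*} (S : Set (X × X)) : Type _ :=
  PresentedGroup ((fun q : X × X => ⁅FreeGroup.of q.1, FreeGroup.of q.2⁆) '' S)

namespace RightAngledArtinGroup

variable {X : Type*} {S : Set (X × X)}

/-- The commutation graph: distinct generators are adjacent if `S` relates them in either order. -/
def graph (S : Set (X × X)) : SimpleGraph X := .fromRel fun x y => (x, y) ∈ S

/-- The generators of the group. -/
def of (S : Set (X × X)) (x : X) : RightAngledArtinGroup S := PresentedGroup.of x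

theorem closure_range_of : Subgroup.closure (Set.range (of S)) = ⊤ :=
  PresentedGroup.closure_range_of _

theorem commute_of_of_mem {x y : X} (h : (x, y) ∈ S) : Commute (of S x) (of S y) := by
  rw [← commutatorElement_eq_one_iff_commute]
  exact PresentedGroup.one_of_mem ⟨(x, y), h, rfl⟩

theorem commute_of_of_adj (x y : X) (h : (graph S).Adj x y) : Commute (of S x) (of S y) :=
  h.2.elim commute_of_of_mem fun h' => (commute_of_of_mem h').symm

section Lift

variable {K : Type*} [Group K] (f : X → K)

/-- The universal property: a map on generators that respects the commutation graph extends to the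
group. -/
def lift (hf : ∀ x y, (graph S).Adj x y → Commute (f x) (f y)) : RightAngledArtinGroup S →* K :=
  PresentedGroup.toGroup (f := f) <| by
    rintro _ ⟨⟨x, y⟩, hxy, rfl⟩
    rw [map_commutatorElement, commutatorElement_eq_one_iff_commute]
    obtain rfl | hne := eq_or_ne x y
    · exact Commute.refl _
    · simpa using hf x y ⟨hne, .inl hxy⟩

theorem lift_of (hf : ∀ x y, (graph S).Adj x y → Commute (f x) (f y)) (x : X) :
    lift f hf (of S x) = f x :=
  PresentedGroup.toGroup.of _

end Lift

theorem closedInProP_bot {p : ℕ} [Fact p.Prime] :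
    ClosedInProP p (⊥ : Subgroup (RightAngledArtinGroup S)) := by
  refine .bot_of_forall_exists_hom fun g hg => ?_
  obtain ⟨w, hw, rfl⟩ := SyllableWord.exists_isReduced commute_of_of_adj closure_range_of g
  have hnil : w ≠ [] := by rintro rfl; exact hg rfl
  obtain ⟨m, hm⟩ := exists_intCast_zmod_pow_ne_zero (Fact.out : p.Prime).ne_one
    (hw.prod_mul_ne_zero (Nat.cast_ne_zero.2 (NeZero.ne p)))
  let R := ZMod (p ^ m)
  let E := Module.End R (Finset (Fin w.length) → R)
  have hpE : (p : E) ^ m = 0 := by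
    rw [← Nat.cast_pow, ← map_natCast (algebraMap R E), ZMod.natCast_self, map_zero]
  have : Finite E := DFunLike.finite _
  let f : X → congruenceUnits E p := fun x =>
    ⟨letterUnit hw.isSeparated (p : R) x, letterUnit_mem_congruenceUnits hw.isSeparated p x⟩
  let Φ : RightAngledArtinGroup S →* congruenceUnits E p := lift f fun x y hxy =>
    Subtype.ext (commute_letterUnit hw.isSeparated (p : R) hxy)
  have hΦ : (Φ (SyllableWord.eval (of S) w) : Eˣ) =
      SyllableWord.eval (letterUnit hw.isSeparated (p : R)) w := by
    have hcomp : Φ ∘ of S = f := funext (lift_of f _)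
    rw [SyllableWord.map_eval, hcomp]
    exact SyllableWord.map_eval (congruenceUnits E p).subtype w
  refine ⟨congruenceUnits E p, inferInstance, inferInstance, Φ, isPGroup_congruenceUnits hpE, ?_⟩
  intro hone
  rw [hone] at hΦ
  refine SyllableWord.eval_letterUnit_ne_one hw.isSeparated (p : R) ?_ hnil hΦ.symm
  simpa [List.map_map, Function.comp_def] using hm

/-- The subgroup `⟨Y⟩` generated by a set of generators. -/
def parabolic (S : Set (X × X)) (Y : Set X) : Subgroup (RightAngledArtinGroup S) :=
  .closure (of S '' Y)

open Classical in
/-- The retraction onto `⟨Y⟩` that kills the generators outside `Y`. -/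
noncomputable def retraction (S : Set (X × X)) (Y : Set X) :
    RightAngledArtinGroup S →* RightAngledArtinGroup S :=
  lift (fun x => if x ∈ Y then of S x else 1) fun x y hxy => by
    have := commute_of_of_adj x y hxy
    split_ifs <;> simp [this]

theorem retraction_of_of_mem {Y : Set X} {x : X} (hx : x ∈ Y) :
    retraction S Y (of S x) = of S x := by
  rw [retraction, lift_of, if_pos hx]

theorem retraction_of_of_notMem {Y : Set X} {x : X} (hx : x ∉ Y) :
    retraction S Y (of S x) = 1 := by
  rw [retraction, lift_of, if_neg hx]

theorem retraction_eq_self {Y : Set X} {g : RightAngledArtinGroup S} (hg : g ∈ parabolic S Y) :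
    retraction S Y g = g := by
  refine MonoidHom.eqOn_closure (f := retraction S Y) (g := .id _) ?_ hg
  rintro _ ⟨x, hx, rfl⟩
  exact retraction_of_of_mem hx

theorem retraction_mem_parabolic (Y : Set X) (g : RightAngledArtinGroup S) :
    retraction S Y g ∈ parabolic S Y := by
  refine PresentedGroup.generated_by _ ((parabolic S Y).comap (retraction S Y)) (fun x => ?_) g
  change retraction S Y (of S x) ∈ parabolic S Y
  by_cases hx : x ∈ Y
  · rw [retraction_of_of_mem hx]
    exact Subgroup.subset_closure ⟨x, hx, rfl⟩
  · rw [retraction_of_of_notMem hx]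
    exact one_mem _

end RightAngledArtinGroup

open RightAngledArtinGroup in
theorem raag_parabolic_closed_pro_p_general {p : ℕ} (hp : p.Prime) {X : Type*} (S : Set (X × X))
    (X' : Set X) : ClosedInProP p (parabolic S X') :=
  have : Fact p.Prime := ⟨hp⟩
  closedInProP_bot.of_retraction (retraction S X') (retraction_mem_parabolic X')
    fun _ => retraction_eq_self

/-- In a right-angled Artin group `⟨X | [x,y] = 1 for (x,y) ∈ S⟩`, the subgroup generated
by the images of any nonempty subset `X'` of the generating set `X` is closed in the
pro-`p` topology. -/
theorem raag_parabolic_closed_pro_p (p : ℕ) (hp : p.Prime) (X : Type*) [Finite X]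
    (S : Set (X × X)) (rels : Set (FreeGroup X))
    (hrels : rels = (fun q : X × X => ⁅FreeGroup.of q.1, FreeGroup.of q.2⁆) '' S)
    (X' : Set X) (hX' : X'.Nonempty) :
    ClosedInProP p (Subgroup.closure ((PresentedGroup.of (rels := rels)) '' X')) := by
  subst hrels
  exact raag_parabolic_closed_pro_p_general hp S X'
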